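/- arXiv:2202.04008 — 2 statements merged into one kernel-verified Lean document; each statement's English description precedes it below -/
import Mathlib

section
/- Let λ be a Borel probability measure on [0,1] and let 𝒫¹ and 𝒫² be two sequences of partitions that are log-balanced in measure with respect to λ, with weight functions f₁ and f₂ respectively. Assume: (i) 𝒫² is self-refining; (ii) f₂ is nondecreasing; (iii) f₂(n+1) − f₂(n) = o(f₂(n)) as n → ∞. Then f₂(L_n(x,𝒫¹,𝒫²))/f₁(n) → 1 as n → ∞ in λ-measure. -/
open MeasureTheory Filter Set Asymptotics

noncomputable section

/-- A topological partition of `[0,1]`: an (automatically at most countable) collection of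
pairwise disjoint nonempty open subintervals of `[0,1]` whose closures cover `[0,1]`. -/
def IsTopPartition (P : Set (Set ℝ)) : Prop :=
  P.Countable ∧
  (∀ I ∈ P, ∃ a b : ℝ, a < b ∧ 0 ≤ a ∧ b ≤ 1 ∧ I = Set.Ioo a b) ∧
  P.PairwiseDisjoint id ∧
  (⋃ I ∈ P, closure I) = Set.Icc (0 : ℝ) 1

/-- The set `E^Ps` of endpoints of the intervals of the partitions of the sequence `Ps`:
the points of `[0,1]` not covered by the open intervals of some partition. -/
def endpointSet (Ps : ℕ → Set (Set ℝ)) : Set ℝ :=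
  ⋃ n, (Set.Icc (0 : ℝ) 1 \ ⋃₀ Ps n)

/-- `I_n^Ps(x)`: the unique interval of the partition `P` containing `x`
(the empty set if there is none). -/
def cell (P : Set (Set ℝ)) (x : ℝ) : Set ℝ :=
  ⋃₀ {I | I ∈ P ∧ x ∈ I}

/-- A sequence of partitions is self-refining if every interval at depth `n+1` is contained
in an interval at depth `n`. -/
def SelfRefining (Ps : ℕ → Set (Set ℝ)) : Prop :=
  ∀ n, ∀ I ∈ Ps (n + 1), ∃ J ∈ Ps n, I ⊆ J

/-- Strictly self-refining: self-refining with `P_{n+1} ≠ P_n` for all `n`. -/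
def StrictSelfRefining (Ps : ℕ → Set (Set ℝ)) : Prop :=
  SelfRefining Ps ∧ ∀ n, Ps (n + 1) ≠ Ps n

/-- `Ps` is log-balanced a.e. with respect to `lam` with weight function `f`. -/
def LogBalancedAE (lam : Measure ℝ) (Ps : ℕ → Set (Set ℝ)) (f : ℕ → ℝ) : Prop :=
  lam (endpointSet Ps) = 0 ∧ Tendsto f atTop atTop ∧
    ∀ᵐ x ∂lam,
      Tendsto (fun n => -Real.log ((lam (cell (Ps n) x)).toReal) / f n) atTop (nhds 1)

/-- `Ps` is log-balanced in measure with respect to `lam` with weight function `f`. -/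
def LogBalancedInMeasure (lam : Measure ℝ) (Ps : ℕ → Set (Set ℝ)) (f : ℕ → ℝ) : Prop :=
  lam (endpointSet Ps) = 0 ∧ Tendsto f atTop atTop ∧
    TendstoInMeasure lam
      (fun n x => -Real.log ((lam (cell (Ps n) x)).toReal) / f n) atTop (fun _ => 1)

/-- The Lochs index `L_n(x, Ps¹, Ps²)`. -/
def lochsIndex (P1 P2 : ℕ → Set (Set ℝ)) (n : ℕ) (x : ℝ) : ℕ :=
  sSup {ℓ : ℕ | cell (P1 n) x ⊆ cell (P2 ℓ) x}

/-- The generalized inverse `f^{[-1]}(y) = min {n : f n ≥ y}` of a weight function. -/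
def weightInv (f : ℕ → ℝ) (y : ℝ) : ℕ := sInf {n : ℕ | y ≤ f n}

/-!
At deterministic indices `u, v → ∞` the informations `-log λ(I_u(x))` and `-log λ(J_v(x))` are,
with high probability, within a factor close to one of `f₁ u` and `f₂ v`. If `f₂ v ≥ C f₁ u` with
`C > 1`, then `J_v(x)` is too small to contain `I_u(x)`. If `f₂ v ≤ c f₁ u` with `c < 1`, then
`I_u(x)` is exponentially smaller than `J_v(x)`, and it lies inside unless it sticks out across one
end of `J_v(x)`; at most two cells do so for each of the intervals `J_v`, hence the total mass of
the exceptional points is at most about `exp (f₂ v - f₁ u)`. These two cases enclose the Lochs index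
between deterministic indices at which `f₂` is comparable to `f₁ n`. Comparing the information at
two depths of a self-refining sequence shows that its weight function is monotone up to factors
arbitrarily close to one, which transfers the enclosure to the values of `f₂`.
-/

open scoped Topology ENNReal

/-- The events `p i` hold *with high probability* along the filter `l`: the measure of the
complement of `p i` tends to zero. The complement is used so that `μ` need not be normalized. -/
def WithHighProb {ι Ω : Type*} [MeasurableSpace Ω] (μ : Measure Ω) (l : Filter ι)
    (p : ι → Ω → Prop) : Prop :=
  Tendsto (fun i => μ {x | ¬ p i x}) l (𝓝 0)

namespace WithHighProb

variable {ι κ Ω : Type*} [MeasurableSpace Ω] {μ : Measure Ω} {l : Filter ι}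
  {p q : ι → Ω → Prop}

theorem mono (hp : WithHighProb μ l p) (hpq : ∀ᶠ i in l, ∀ x, p i x → q i x) :
    WithHighProb μ l q :=
  tendsto_of_tendsto_of_tendsto_of_le_of_le' tendsto_const_nhds hp (.of_forall fun _ => zero_le)
    (hpq.mono fun _ h => measure_mono fun x => mt (h x))

theorem and (hp : WithHighProb μ l p) (hq : WithHighProb μ l q) :
    WithHighProb μ l fun i x => p i x ∧ q i x := by
  refine tendsto_of_tendsto_of_tendsto_of_le_of_le tendsto_const_nhds
    (by simpa only [add_zero] using hp.add hq) (fun _ => zero_le) fun i => ?_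
  refine (measure_mono fun x hx => ?_).trans (measure_union_le {x | ¬ p i x} {x | ¬ q i x})
  exact not_and_or.1 hx

theorem comp {l' : Filter κ} {u : κ → ι} (hp : WithHighProb μ l p) (hu : Tendsto u l' l) :
    WithHighProb μ l' fun k => p (u k) :=
  Tendsto.comp (g := fun i => μ {x | ¬ p i x}) hp hu

theorem eventually_exists [NeZero μ] (hp : WithHighProb μ l p) : ∀ᶠ i in l, ∃ x, p i x := by
  have hlt := hp.eventually_lt_const (Measure.measure_univ_pos.2 (NeZero.ne μ))
  filter_upwards [hlt] with i hi
  by_contra! h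
  simp only [h, not_false_eq_true, ofPred_true, lt_self_iff_false] at hi

end WithHighProb

theorem tendstoInMeasure_iff_withHighProb {ι Ω E : Type*} [MeasurableSpace Ω]
    [PseudoMetricSpace E] {μ : Measure Ω} {l : Filter ι} {f : ι → Ω → E} {g : Ω → E} :
    TendstoInMeasure μ f l g ↔
      ∀ ε > 0, WithHighProb μ l fun i x => dist (f i x) (g x) < ε := by
  simp only [tendstoInMeasure_iff_dist, WithHighProb, not_lt]

theorem mem_lowerBounds_or_mem_upperBounds_of_notMem {α : Type*} [LinearOrder α] {J : Set α}
    (hJ : J.OrdConnected) {y : α} (hy : y ∉ J) : y ∈ lowerBounds J ∨ y ∈ upperBounds J := by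
  by_contra! h
  simp only [mem_lowerBounds, mem_upperBounds, not_forall, not_le] at h
  obtain ⟨⟨z, hz, hzy⟩, ⟨w, hw, hyw⟩⟩ := h
  exact hy (hJ.out hz hw ⟨hzy.le, hyw.le⟩)

theorem measure_le_of_forall_mem {Ω : Type*} [MeasurableSpace Ω] {μ : Measure Ω} {C : Ω → Set Ω}
    {D : Set Ω} {s : ℝ≥0∞} (hmem : ∀ x ∈ D, ∀ y ∈ D, y ∈ C x) (hs : ∀ x ∈ D, μ (C x) ≤ s) :
    μ D ≤ s := by
  obtain rfl | ⟨x, hx⟩ := D.eq_empty_or_nonempty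
  · simp only [measure_empty, zero_le]
  · exact (measure_mono (hmem x hx)).trans (hs x hx)

/-- A family of pairwise disjoint intervals of the line, of any kind (open or not, bounded or not,
possibly degenerate); it need not cover the line. -/
structure IsIntervalFamily (P : Set (Set ℝ)) : Prop where
  ordConnected : ∀ I ∈ P, I.OrdConnected
  pairwiseDisjoint : P.PairwiseDisjoint id

theorem IsTopPartition.isIntervalFamily {P : Set (Set ℝ)} (hP : IsTopPartition P) :
    IsIntervalFamily P where
  ordConnected I hI := by
    obtain ⟨a, b, -, -, -, rfl⟩ := hP.2.1 I hI
    exact ordConnected_Ioo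
  pairwiseDisjoint := hP.2.2.1

theorem SelfRefining.antitone_cell {Ps : ℕ → Set (Set ℝ)} (hPs : SelfRefining Ps) (x : ℝ) :
    Antitone fun n => cell (Ps n) x := by
  refine antitone_nat_of_succ_le fun n => sUnion_subset fun I ⟨hI, hxI⟩ => ?_
  obtain ⟨J, hJ, hIJ⟩ := hPs n I hI
  exact hIJ.trans (subset_sUnion_of_mem ⟨hJ, hIJ hxI⟩)

theorem lochsIndex_mem_Ico {P1 P2 : ℕ → Set (Set ℝ)} (hP2 : SelfRefining P2) {n k m : ℕ} {x : ℝ}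
    (hk : cell (P1 n) x ⊆ cell (P2 k) x) (hm : ¬ cell (P1 n) x ⊆ cell (P2 m) x) :
    lochsIndex P1 P2 n x ∈ Ico k m := by
  have hlt : ∀ l, cell (P1 n) x ⊆ cell (P2 l) x → l < m := fun l hl =>
    not_le.1 fun hml => hm (hl.trans (hP2.antitone_cell x hml))
  have hbdd : BddAbove {l | cell (P1 n) x ⊆ cell (P2 l) x} := ⟨m, fun l hl => (hlt l hl).le⟩
  exact ⟨le_csSup hbdd hk, hlt _ (Nat.sSup_mem ⟨k, hk⟩ hbdd)⟩

namespace IsIntervalFamily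

variable {P Q : Set (Set ℝ)} {I J : Set ℝ} {x y : ℝ}

theorem cell_eq_of_mem (hP : IsIntervalFamily P) (hI : I ∈ P) (hx : x ∈ I) : cell P x = I := by
  refine Subset.antisymm (sUnion_subset fun J ⟨hJ, hxJ⟩ => ?_) (subset_sUnion_of_mem ⟨hI, hx⟩)
  exact (hP.pairwiseDisjoint.elim_set hJ hI x hxJ hx).subset

theorem cell_mem_of_nonempty (hP : IsIntervalFamily P) (h : (cell P x).Nonempty) :
    cell P x ∈ P ∧ x ∈ cell P x := by
  obtain ⟨-, I, ⟨hI, hxI⟩, -⟩ := h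
  rw [hP.cell_eq_of_mem hI hxI]
  exact ⟨hI, hxI⟩

theorem eq_of_sup_le_inf (hP : IsIntervalFamily P) (hI : I ∈ P) (hJ : J ∈ P) {a b c d : ℝ}
    (ha : a ∈ I) (hb : b ∈ I) (hc : c ∈ J) (hd : d ∈ J) (h : a ⊔ c ≤ b ⊓ d) : I = J :=
  hP.pairwiseDisjoint.elim_set hI hJ (a ⊔ c)
    ((hP.ordConnected I hI).out ha hb ⟨le_sup_left, h.trans inf_le_left⟩)
    ((hP.ordConnected J hJ).out hc hd ⟨le_sup_right, h.trans inf_le_right⟩)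

theorem measure_cell_inter_lowerBounds_le (hP : IsIntervalFamily P) (lam : Measure ℝ) (J : Set ℝ)
    (s : ℝ≥0∞) :
    lam {x ∈ J | (cell P x ∩ lowerBounds J).Nonempty ∧ lam (cell P x) ≤ s} ≤ s := by
  refine measure_le_of_forall_mem (C := cell P) ?_ fun x hx => hx.2.2
  rintro x ⟨hx, ⟨y, hy, hyJ⟩, -⟩ x' ⟨hx', ⟨y', hy', hyJ'⟩, -⟩
  obtain ⟨hI, hxI⟩ := hP.cell_mem_of_nonempty ⟨y, hy⟩
  obtain ⟨hI', hxI'⟩ := hP.cell_mem_of_nonempty ⟨y', hy'⟩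
  rwa [hP.eq_of_sup_le_inf hI hI' hy hxI hy' hxI'
    (sup_le (le_inf (hyJ hx) (hyJ hx')) (le_inf (hyJ' hx) (hyJ' hx')))]

theorem measure_cell_inter_upperBounds_le (hP : IsIntervalFamily P) (lam : Measure ℝ) (J : Set ℝ)
    (s : ℝ≥0∞) :
    lam {x ∈ J | (cell P x ∩ upperBounds J).Nonempty ∧ lam (cell P x) ≤ s} ≤ s := by
  refine measure_le_of_forall_mem (C := cell P) ?_ fun x hx => hx.2.2
  rintro x ⟨hx, ⟨y, hy, hyJ⟩, -⟩ x' ⟨hx', ⟨y', hy', hyJ'⟩, -⟩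
  obtain ⟨hI, hxI⟩ := hP.cell_mem_of_nonempty ⟨y, hy⟩
  obtain ⟨hI', hxI'⟩ := hP.cell_mem_of_nonempty ⟨y', hy'⟩
  rwa [hP.eq_of_sup_le_inf hI hI' hxI hy hxI' hy'
    (sup_le (le_inf (hyJ hx) (hyJ' hx)) (le_inf (hyJ hx') (hyJ' hx')))]

theorem measure_not_cell_subset_le (hP : IsIntervalFamily P) (lam : Measure ℝ)
    (hJ : J.OrdConnected) (s : ℝ≥0∞) :
    lam {x ∈ J | ¬ cell P x ⊆ J ∧ lam (cell P x) ≤ s} ≤ 2 * s := by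
  calc lam {x ∈ J | ¬ cell P x ⊆ J ∧ lam (cell P x) ≤ s}
    _ ≤ lam ({x ∈ J | (cell P x ∩ lowerBounds J).Nonempty ∧ lam (cell P x) ≤ s} ∪
          {x ∈ J | (cell P x ∩ upperBounds J).Nonempty ∧ lam (cell P x) ≤ s}) := by
      refine measure_mono fun x ⟨hx, hnot, hs⟩ => ?_
      obtain ⟨y, hy, hyJ⟩ := not_subset.1 hnot
      exact (mem_lowerBounds_or_mem_upperBounds_of_notMem hJ hyJ).imp
        (fun h => ⟨hx, ⟨y, hy, h⟩, hs⟩) fun h => ⟨hx, ⟨y, hy, h⟩, hs⟩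
    _ ≤ s + s := (measure_union_le _ _).trans
      (add_le_add (hP.measure_cell_inter_lowerBounds_le lam J s)
        (hP.measure_cell_inter_upperBounds_le lam J s))
    _ = 2 * s := (two_mul s).symm

theorem mul_measure_not_cell_subset_cell_le (hP : IsIntervalFamily P) (hQ : IsIntervalFamily Q)
    (lam : Measure ℝ) [SFinite lam] (s t : ℝ≥0∞) :
    t * lam {x | ¬ cell P x ⊆ cell Q x ∧ lam (cell P x) ≤ s ∧ t ≤ lam (cell Q x)} ≤
      2 * s * lam univ := by
  obtain rfl | ht := eq_or_ne t 0
  · simp only [zero_mul, zero_le]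
  let F := {J : Set ℝ // J ∈ Q ∧ t ≤ lam J}
  have hmeas : ∀ J : F, MeasurableSet J.1 := fun J => (hQ.ordConnected _ J.2.1).measurableSet
  have hdisj : Pairwise (Function.onFun Disjoint fun J : F => J.1) := fun J J' hne =>
    hQ.pairwiseDisjoint J.2.1 J'.2.1 (Subtype.coe_ne_coe.2 hne)
  have : Countable F := by
    refine countable_univ_iff.1
      ((Measure.countable_meas_pos_of_disjoint_iUnion (μ := lam) hmeas hdisj).mono ?_)
    exact fun J _ => (pos_iff_ne_zero.2 ht).trans_le J.2.2
  have hcover : {x | ¬ cell P x ⊆ cell Q x ∧ lam (cell P x) ≤ s ∧ t ≤ lam (cell Q x)} ⊆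
      ⋃ J : F, {x ∈ J.1 | ¬ cell P x ⊆ J.1 ∧ lam (cell P x) ≤ s} := by
    rintro x ⟨hnot, hs, hx⟩
    have hne : (cell Q x).Nonempty := nonempty_of_measure_ne_zero (ne_bot_of_le_ne_bot ht hx)
    obtain ⟨hQx, hxQ⟩ := hQ.cell_mem_of_nonempty hne
    exact mem_iUnion.2 ⟨⟨cell Q x, hQx, hx⟩, hxQ, hnot, hs⟩
  calc t * lam {x | ¬ cell P x ⊆ cell Q x ∧ lam (cell P x) ≤ s ∧ t ≤ lam (cell Q x)}
    _ ≤ t * ∑' _ : F, 2 * s := by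
      gcongr
      refine (measure_mono hcover).trans ((measure_iUnion_le _).trans (ENNReal.tsum_le_tsum ?_))
      exact fun J => hP.measure_not_cell_subset_le lam (hQ.ordConnected _ J.2.1) s
    _ = 2 * s * ∑' _ : F, t := by
      rw [← ENNReal.tsum_mul_left, ← ENNReal.tsum_mul_left]
      simp only [mul_comm]
    _ ≤ 2 * s * ∑' J : F, lam J.1 := by
      gcongr with J
      exact J.2.2
    _ ≤ 2 * s * lam univ := by
      gcongr
      exact tsum_measure_le_measure_univ (fun J => (hmeas J).nullMeasurableSet)
        fun J J' h => (hdisj h).aedisjoint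

end IsIntervalFamily

/-- The information function `-log λ(I(x))` of the family `P`. Where `I(x)` is empty or null its
value is the junk value `0`, so that a positive value certifies `λ(I(x)) > 0`. -/
def cellInfo (lam : Measure ℝ) (P : Set (Set ℝ)) (x : ℝ) : ℝ :=
  -Real.log (lam (cell P x)).toReal

section CellInfo

variable {lam : Measure ℝ} [IsFiniteMeasure lam] {P Q : Set (Set ℝ)} {x : ℝ}

theorem measure_cell_eq_exp_neg_cellInfo (h : 0 < cellInfo lam P x) :
    lam (cell P x) = ENNReal.ofReal (Real.exp (-cellInfo lam P x)) := by
  have hpos : 0 < (lam (cell P x)).toReal := by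
    refine ENNReal.toReal_nonneg.lt_of_ne fun h0 => h.ne' ?_
    rw [cellInfo, ← h0, Real.log_zero, neg_zero]
  rw [cellInfo, neg_neg, Real.exp_log hpos, ENNReal.ofReal_toReal (measure_ne_top lam _)]

theorem cellInfo_le_of_cell_subset (h : cell P x ⊆ cell Q x) (hP : 0 < cellInfo lam P x) :
    cellInfo lam Q x ≤ cellInfo lam P x := by
  obtain hQ | hQ := le_or_gt (cellInfo lam Q x) 0
  · exact hQ.trans hP.le
  have hle := measure_mono (μ := lam) h
  rw [measure_cell_eq_exp_neg_cellInfo hP, measure_cell_eq_exp_neg_cellInfo hQ,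
    ENNReal.ofReal_le_ofReal_iff (Real.exp_pos _).le, Real.exp_le_exp] at hle
  exact neg_le_neg_iff.1 hle

theorem measure_cellInfo_not_cell_subset_cell_le (hP : IsIntervalFamily P)
    (hQ : IsIntervalFamily Q) {p : ℝ} (hp : 0 < p) (q : ℝ) :
    lam {x | ¬ cell P x ⊆ cell Q x ∧ p ≤ cellInfo lam P x ∧ cellInfo lam Q x ∈ Ioc 0 q} ≤
      ENNReal.ofReal (2 * Real.exp (q - p)) * lam univ := by
  set s := ENNReal.ofReal (Real.exp (-p))
  set t := ENNReal.ofReal (Real.exp (-q))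
  have hsub : {x | ¬ cell P x ⊆ cell Q x ∧ p ≤ cellInfo lam P x ∧ cellInfo lam Q x ∈ Ioc 0 q} ⊆
      {x | ¬ cell P x ⊆ cell Q x ∧ lam (cell P x) ≤ s ∧ t ≤ lam (cell Q x)} := by
    rintro x ⟨hnot, hxP, hxQ⟩
    rw [mem_ofPred_eq, measure_cell_eq_exp_neg_cellInfo (hp.trans_le hxP),
      measure_cell_eq_exp_neg_cellInfo hxQ.1]
    exact ⟨hnot, ENNReal.ofReal_le_ofReal (Real.exp_le_exp.2 (neg_le_neg hxP)),
      ENNReal.ofReal_le_ofReal (Real.exp_le_exp.2 (neg_le_neg hxQ.2))⟩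
  have hqt : ENNReal.ofReal (Real.exp q) * t = 1 := by
    rw [← ENNReal.ofReal_mul (Real.exp_pos _).le, ← Real.exp_add, add_neg_cancel, Real.exp_zero,
      ENNReal.ofReal_one]
  calc _ ≤ lam {x | ¬ cell P x ⊆ cell Q x ∧ lam (cell P x) ≤ s ∧ t ≤ lam (cell Q x)} :=
        measure_mono hsub
    _ = ENNReal.ofReal (Real.exp q) *
          (t * lam {x | ¬ cell P x ⊆ cell Q x ∧ lam (cell P x) ≤ s ∧ t ≤ lam (cell Q x)}) := by
      rw [← mul_assoc, hqt, one_mul]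
    _ ≤ ENNReal.ofReal (Real.exp q) * (2 * s * lam univ) := by
      gcongr ENNReal.ofReal (Real.exp q) * ?_
      exact hP.mul_measure_not_cell_subset_cell_le hQ lam s t
    _ = ENNReal.ofReal (2 * Real.exp (q - p)) * lam univ := by
      rw [sub_eq_add_neg, Real.exp_add, ENNReal.ofReal_mul two_pos.le, ENNReal.ofReal_ofNat,
        ENNReal.ofReal_mul (Real.exp_pos _).le]
      ring

end CellInfo

theorem exists_lt_one_lt_mul_lt {c : ℝ} (hc0 : 0 < c) (hc1 : c < 1) :
    ∃ a b : ℝ, 0 < a ∧ a < 1 ∧ 1 < b ∧ b * c < a := by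
  obtain ⟨a, hca, ha1⟩ := exists_between hc1
  obtain ⟨b, hb1, hba⟩ := exists_between ((one_lt_div hc0).2 hca)
  exact ⟨a, b, hc0.trans hca, ha1, hb1, (lt_div_iff₀ hc0).1 hba⟩

section LogBalanced

variable {ι : Type*} {l : Filter ι} {lam : Measure ℝ} {P Q : ℕ → Set (Set ℝ)} {f g : ℕ → ℝ}

theorem withHighProb_cellInfo_mem_Ioo (hf : Tendsto f atTop atTop)
    (hP : TendstoInMeasure lam (fun n x => cellInfo lam (P n) x / f n) atTop fun _ => 1)
    {a b : ℝ} (ha : a < 1) (hb : 1 < b) :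
    WithHighProb lam atTop fun n x => cellInfo lam (P n) x ∈ Ioo (a * f n) (b * f n) := by
  have hε : 0 < min (1 - a) (b - 1) := lt_min (sub_pos.2 ha) (sub_pos.2 hb)
  refine (tendstoInMeasure_iff_withHighProb.1 hP _ hε).mono ?_
  filter_upwards [hf.eventually_gt_atTop 0] with n hn x hx
  obtain ⟨hxa, hxb⟩ := lt_min_iff.1 hx
  rw [Real.dist_eq, abs_lt] at hxa hxb
  exact ⟨(lt_div_iff₀ hn).1 (by linarith), (div_lt_iff₀ hn).1 (by linarith)⟩

variable [IsFiniteMeasure lam] {u v : ι → ℕ} {c : ℝ}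

theorem withHighProb_mul_lt_of_cell_subset (hf : Tendsto f atTop atTop) (hg : Tendsto g atTop atTop)
    (hPf : TendstoInMeasure lam (fun n x => cellInfo lam (P n) x / f n) atTop fun _ => 1)
    (hQg : TendstoInMeasure lam (fun n x => cellInfo lam (Q n) x / g n) atTop fun _ => 1)
    (hu : Tendsto u l atTop) (hv : Tendsto v l atTop) (hc0 : 0 < c) (hc1 : c < 1) :
    WithHighProb lam l fun i x =>
      cell (P (u i)) x ⊆ cell (Q (v i)) x → c * g (v i) < f (u i) := by
  obtain ⟨a, b, ha0, ha1, hb1, hbca⟩ := exists_lt_one_lt_mul_lt hc0 hc1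
  have hinfoP := (withHighProb_cellInfo_mem_Ioo hf hPf ha1 hb1).comp hu
  have hinfoQ := (withHighProb_cellInfo_mem_Ioo hg hQg ha1 hb1).comp hv
  refine (hinfoP.and hinfoQ).mono ?_
  filter_upwards [hu.eventually (hf.eventually_gt_atTop 0),
    hv.eventually (hg.eventually_gt_atTop 0)] with i hfi hgi x ⟨hxP, hxQ⟩ hsub
  have hle := cellInfo_le_of_cell_subset hsub ((mul_pos ha0 hfi).trans hxP.1)
  refine lt_of_mul_lt_mul_left ?_ (zero_lt_one.trans hb1).le
  calc b * (c * g (v i)) = b * c * g (v i) := (mul_assoc b c _).symm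
    _ < a * g (v i) := mul_lt_mul_of_pos_right hbca hgi
    _ < cellInfo lam (Q (v i)) x := hxQ.1
    _ ≤ cellInfo lam (P (u i)) x := hle
    _ < b * f (u i) := hxP.2

theorem withHighProb_cell_subset_of_le_mul (hPint : ∀ n, IsIntervalFamily (P n))
    (hQint : ∀ n, IsIntervalFamily (Q n))
    (hf : Tendsto f atTop atTop) (hg : Tendsto g atTop atTop)
    (hPf : TendstoInMeasure lam (fun n x => cellInfo lam (P n) x / f n) atTop fun _ => 1)
    (hQg : TendstoInMeasure lam (fun n x => cellInfo lam (Q n) x / g n) atTop fun _ => 1)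
    (hu : Tendsto u l atTop) (hv : Tendsto v l atTop) (hc0 : 0 < c) (hc1 : c < 1) :
    WithHighProb lam l fun i x =>
      g (v i) ≤ c * f (u i) → cell (P (u i)) x ⊆ cell (Q (v i)) x := by
  obtain ⟨a, b, ha0, ha1, hb1, hbca⟩ := exists_lt_one_lt_mul_lt hc0 hc1
  have hfu : ∀ᶠ i in l, 0 < f (u i) := hu.eventually (hf.eventually_gt_atTop 0)
  have hgv : ∀ᶠ i in l, 0 < g (v i) := hv.eventually (hg.eventually_gt_atTop 0)
  have hcross : WithHighProb lam l fun i x => ¬ (¬ cell (P (u i)) x ⊆ cell (Q (v i)) x ∧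
      a * f (u i) ≤ cellInfo lam (P (u i)) x ∧
      cellInfo lam (Q (v i)) x ∈ Ioc 0 (b * c * f (u i))) := by
    have hexp : Tendsto (fun i => ENNReal.ofReal (2 * Real.exp (b * c * f (u i) - a * f (u i))) *
        lam univ) l (𝓝 0) := by
      simp only [← sub_mul]
      have h := (Real.tendsto_exp_atBot.comp
        ((hf.comp hu).const_mul_atTop_of_neg (sub_neg.2 hbca))).const_mul 2
      simpa using ENNReal.Tendsto.mul_const (ENNReal.tendsto_ofReal h)
        (Or.inr (measure_ne_top lam univ))
    refine tendsto_of_tendsto_of_tendsto_of_le_of_le' tendsto_const_nhds hexp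
      (.of_forall fun _ => zero_le) ?_
    filter_upwards [hfu] with i hi
    simp only [not_not]
    exact measure_cellInfo_not_cell_subset_cell_le (hPint _) (hQint _) (mul_pos ha0 hi) _
  have hinfoP := (withHighProb_cellInfo_mem_Ioo hf hPf ha1 hb1).comp hu
  have hinfoQ := (withHighProb_cellInfo_mem_Ioo hg hQg ha1 hb1).comp hv
  refine (hcross.and (hinfoP.and hinfoQ)).mono ?_
  filter_upwards [hgv] with i hgi x ⟨hx, hxP, hxQ⟩ hgf
  by_contra hnot
  refine hx ⟨hnot, hxP.1.le, (mul_pos ha0 hgi).trans hxQ.1, hxQ.2.le.trans ?_⟩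
  rw [mul_assoc]
  exact mul_le_mul_of_nonneg_left hgf (zero_lt_one.trans hb1).le

theorem SelfRefining.eventually_mul_le [NeZero lam] (hP : SelfRefining P)
    (hf : Tendsto f atTop atTop)
    (hPf : TendstoInMeasure lam (fun n x => cellInfo lam (P n) x / f n) atTop fun _ => 1)
    (hc0 : 0 < c) (hc1 : c < 1) : ∀ᶠ m in atTop, ∀ n ≥ m, c * f m ≤ f n := by
  have hlt := (withHighProb_mul_lt_of_cell_subset hf hf hPf hPf tendsto_snd tendsto_fst
    hc0 hc1).eventually_exists (l := atTop ×ˢ atTop)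
  rw [prod_atTop_atTop_eq, eventually_atTop_prod_self] at hlt
  obtain ⟨N, hN⟩ := hlt
  filter_upwards [eventually_ge_atTop N] with m hm n hmn
  obtain ⟨x, hx⟩ := hN m n hm (hm.trans hmn)
  exact (hx (hP.antitone_cell x hmn)).le

end LogBalanced

section Weights

variable {f : ℕ → ℝ}

theorem le_apply_weightInv (hf : Tendsto f atTop atTop) (y : ℝ) : y ≤ f (weightInv f y) :=
  Nat.sInf_mem (hf.eventually_ge_atTop y).exists

theorem apply_lt_of_lt_weightInv {y : ℝ} {k : ℕ} (hk : k < weightInv f y) : f k < y :=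
  not_le.1 (Nat.notMem_of_lt_sInf hk)

theorem tendsto_weightInv (hf : Tendsto f atTop atTop) : Tendsto (weightInv f) atTop atTop := by
  refine tendsto_atTop.2 fun K => ?_
  have hlt : ∀ᶠ y in atTop, ∀ i ∈ Finset.range K, f i < y :=
    (Finset.eventually_all _).2 fun i _ => eventually_gt_atTop (f i)
  filter_upwards [hlt] with y hy
  by_contra! h
  exact (hy _ (Finset.mem_range.2 h)).not_ge (le_apply_weightInv hf y)

theorem eventually_mul_succ_le (hf : Tendsto f atTop atTop)
    (hstep : (fun n => f (n + 1) - f n) =o[atTop] f) {c : ℝ} (hc0 : 0 < c) (hc1 : c < 1) :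
    ∀ᶠ n in atTop, c * f (n + 1) ≤ f n := by
  have hpos : 0 < c⁻¹ - 1 := sub_pos.2 ((one_lt_inv₀ hc0).2 hc1)
  filter_upwards [hstep.bound hpos, hf.eventually_gt_atTop 0] with n hn hfn
  rw [Real.norm_of_nonneg hfn.le] at hn
  have hle : f (n + 1) ≤ c⁻¹ * f n := by linarith [(Real.le_norm_self _).trans hn]
  exact (le_inv_mul_iff₀ hc0).1 hle

theorem exists_bracketing_indices (hf : Tendsto f atTop atTop) {y : ℕ → ℝ}
    (hy : Tendsto y atTop atTop) {c : ℝ} (hc0 : 0 < c)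
    (hstep : ∀ᶠ n in atTop, c * f (n + 1) ≤ f n)
    (hmono : ∀ᶠ m in atTop, ∀ n ≥ m, c * f m ≤ f n) :
    ∃ k m : ℕ → ℕ, Tendsto k atTop atTop ∧ Tendsto m atTop atTop ∧
      ∀ᶠ n in atTop, f (k n) ≤ c * y n ∧ y n ≤ c * f (m n) ∧
        ∀ i ∈ Ico (k n) (m n), f i ∈ Icc (c ^ 3 * y n) (c⁻¹ * y n) := by
  have hW := (tendsto_weightInv hf).comp (hy.const_mul_atTop hc0)
  have hk : Tendsto (fun n => weightInv f (c * y n) - 1) atTop atTop :=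
    (tendsto_sub_atTop_nat 1).comp hW
  refine ⟨fun n => weightInv f (c * y n) - 1, fun n => weightInv f (c⁻¹ * y n), hk,
    (tendsto_weightInv hf).comp (hy.const_mul_atTop (inv_pos.2 hc0)), ?_⟩
  filter_upwards [hW.eventually_gt_atTop 0, hk.eventually hstep, hk.eventually hmono]
    with n hWn hstepn hmonon
  have hWpos : 0 < weightInv f (c * y n) := hWn
  refine ⟨(apply_lt_of_lt_weightInv (Nat.sub_one_lt hWpos.ne')).le,
    (inv_mul_le_iff₀ hc0).1 (le_apply_weightInv hf _), fun i hi => ⟨?_, ?_⟩⟩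
  · rw [Nat.sub_add_cancel hWpos] at hstepn
    calc c ^ 3 * y n = c * (c * (c * y n)) := by ring
      _ ≤ c * (c * f (weightInv f (c * y n))) := by
        gcongr
        exact le_apply_weightInv hf _
      _ ≤ c * f (weightInv f (c * y n) - 1) := by gcongr
      _ ≤ f i := hmonon i hi.1
  · exact (apply_lt_of_lt_weightInv hi.2).le

end Weights

theorem exists_cube_and_inv_near_one {ε : ℝ} (hε : 0 < ε) :
    ∃ c : ℝ, 0 < c ∧ c < 1 ∧ 1 - ε < c ^ 3 ∧ c⁻¹ < 1 + ε := by
  have hcube : Tendsto (fun c : ℝ => c ^ 3) (𝓝[<] 1) (𝓝 1) := by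
    simpa using ((continuous_pow 3).tendsto (1 : ℝ)).mono_left nhdsWithin_le_nhds
  have hinv : Tendsto (fun c : ℝ => c⁻¹) (𝓝[<] 1) (𝓝 1) := by
    simpa using (tendsto_inv₀ (one_ne_zero (α := ℝ))).mono_left nhdsWithin_le_nhds
  have hIoo : ∀ᶠ c : ℝ in 𝓝[<] 1, c ∈ Ioo 0 1 := Ioo_mem_nhdsLT one_pos
  obtain ⟨c, ⟨⟨hc0, hc1⟩, hc3⟩, hci⟩ := ((hIoo.and
    (hcube.eventually_const_lt (sub_lt_self 1 hε))).and
    (hinv.eventually_lt_const (lt_add_of_pos_right 1 hε))).exists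
  exact ⟨c, hc0, hc1, hc3, hci⟩

theorem lochs_type_in_measure_general {lam : Measure ℝ} [IsFiniteMeasure lam]
    {P1 P2 : ℕ → Set (Set ℝ)}
    (hP1 : ∀ n, IsIntervalFamily (P1 n)) (hP2 : ∀ n, IsIntervalFamily (P2 n))
    {f₁ f₂ : ℕ → ℝ} (hf₁ : Tendsto f₁ atTop atTop) (hf₂ : Tendsto f₂ atTop atTop)
    (hb1 : TendstoInMeasure lam (fun n x => cellInfo lam (P1 n) x / f₁ n) atTop fun _ => 1)
    (hb2 : TendstoInMeasure lam (fun n x => cellInfo lam (P2 n) x / f₂ n) atTop fun _ => 1)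
    (hself : SelfRefining P2) (hlittle : (fun n => f₂ (n + 1) - f₂ n) =o[atTop] f₂) :
    TendstoInMeasure lam (fun n x => f₂ (lochsIndex P1 P2 n x) / f₁ n) atTop fun _ => 1 := by
  obtain rfl | hlam := eq_or_ne lam 0
  · exact fun _ _ => by simp only [Measure.coe_zero, Pi.zero_apply, tendsto_const_nhds]
  have : NeZero lam := ⟨hlam⟩
  refine tendstoInMeasure_iff_withHighProb.2 fun ε hε => ?_
  obtain ⟨c, hc0, hc1, hc3, hci⟩ := exists_cube_and_inv_near_one hε
  obtain ⟨k, m, hk, hm, hkm⟩ := exists_bracketing_indices hf₂ hf₁ hc0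
    (eventually_mul_succ_le hf₂ hlittle hc0 hc1) (hself.eventually_mul_le hf₂ hb2 hc0 hc1)
  have hin := withHighProb_cell_subset_of_le_mul hP1 hP2 hf₁ hf₂ hb1 hb2 tendsto_id hk hc0 hc1
  have hout := withHighProb_mul_lt_of_cell_subset hf₁ hf₂ hb1 hb2 tendsto_id hm hc0 hc1
  refine (hin.and hout).mono ?_
  filter_upwards [hkm, hf₁.eventually_gt_atTop 0] with n ⟨hkn, hmn, hIcc⟩ hpos x ⟨hx, hx'⟩
  obtain ⟨hlow, hupp⟩ := hIcc _ <| lochsIndex_mem_Ico hself (hx hkn) fun h => (hx' h).not_ge hmn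
  rw [Real.dist_eq, abs_sub_lt_iff, sub_lt_iff_lt_add', sub_lt_comm]
  exact ⟨((div_le_iff₀ hpos).2 hupp).trans_lt hci, hc3.trans_le ((le_div_iff₀ hpos).2 hlow)⟩

/-- Theorem (Lochs-type theorem in measure). -/
theorem lochs_type_in_measure (lam : Measure ℝ) [IsProbabilityMeasure lam]
    (hlam : lam (Set.Icc (0 : ℝ) 1)ᶜ = 0)
    (P1 P2 : ℕ → Set (Set ℝ))
    (hP1 : ∀ n, IsTopPartition (P1 n)) (hP2 : ∀ n, IsTopPartition (P2 n))
    (f₁ f₂ : ℕ → ℝ)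
    (hb1 : LogBalancedInMeasure lam P1 f₁) (hb2 : LogBalancedInMeasure lam P2 f₂)
    (hself : SelfRefining P2)
    (hmono : Monotone f₂)
    (hlittle : (fun n => f₂ (n + 1) - f₂ n) =o[atTop] f₂) :
    TendstoInMeasure lam
      (fun n x => f₂ (lochsIndex P1 P2 n x) / f₁ n) atTop (fun _ => (1 : ℝ)) :=
  lochs_type_in_measure_general (fun n => (hP1 n).isIntervalFamily)
    (fun n => (hP2 n).isIntervalFamily) hb1.2.1 hb2.2.1 hb1.2.2 hb2.2.2 hself hlittle
end
end

section
/- Let λ be a Borel probability measure on [0,1] and let 𝒫 = {P_n}_{n∈ℕ} be a sequence of partitions. If 𝒫 is log-balanced in measure (or a.e.) with respect to λ, then ‖P_n‖_λ := sup_{I ∈ P_n} λ(I) → 0 as n → ∞. -/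
open MeasureTheory Filter Set Asymptotics

noncomputable section

/-!
A set `I ∈ Ps n` of measure larger than `ε` carries information at most `-log ε` at each of its
points. As soon as `f n > 0` and `f n ≥ -2 log ε`, the quotient `information / f n` is therefore at
distance at least `1/2` from `1` on all of `I`, and convergence in measure eventually forbids such
a set. Convergence almost everywhere reduces to this case because the information function of a
countable family of measurable sets is measurable.
-/

section Information

variable {α : Type*} {P : Set (Set α)} {I : Set α} {x : α}

/-- The star of `x` in the family `P`. When the members of `P` are disjoint it is the member
containing `x`, or `∅` if there is none; for families of subsets of `ℝ` it is `cell`. -/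
def starAt (P : Set (Set α)) (x : α) : Set α :=
  ⋃₀ {I | I ∈ P ∧ x ∈ I}

theorem subset_starAt (hI : I ∈ P) (hx : x ∈ I) : I ⊆ starAt P x :=
  subset_sUnion_of_mem ⟨hI, hx⟩

variable [MeasurableSpace α] {μ : Measure α}

/-- The information function `-log μ(P(x))` of a family `P`, with `P(x)` the star of `x` in `P`.
Its value is `0` at points whose star is null, because `Real.log 0 = 0`. -/
def information (μ : Measure α) (P : Set (Set α)) (x : α) : ℝ :=
  -Real.log (μ.real (starAt P x))

theorem measurable_measure_starAt [SFinite μ] (hP : P.Countable)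
    (hmeas : ∀ I ∈ P, MeasurableSet I) : Measurable fun x => μ (starAt P x) := by
  have hsection (x : α) : starAt P x = Prod.mk x ⁻¹' ⋃ I ∈ P, I ×ˢ I := by
    ext y
    simp [starAt, and_assoc, and_left_comm]
  simp only [hsection]
  exact measurable_measure_prodMk_left
    (.biUnion hP fun I hI => (hmeas I hI).prod (hmeas I hI))

theorem measurable_information [SFinite μ] (hP : P.Countable)
    (hmeas : ∀ I ∈ P, MeasurableSet I) : Measurable (information μ P) :=
  (measurable_measure_starAt hP hmeas).ennreal_toReal.log.neg

theorem information_le_neg_log [IsFiniteMeasure μ] {r : ℝ} (hr : 0 < r) (hI : I ∈ P)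
    (hx : x ∈ I) (hrI : r ≤ μ.real I) : information μ P x ≤ -Real.log r :=
  neg_le_neg (Real.log_le_log hr (hrI.trans (measureReal_mono (subset_starAt hI hx))))

theorem tendsto_iSup_measure_of_tendstoInMeasure_information [IsFiniteMeasure μ] {ι : Type*}
    {l : Filter ι} {Ps : ι → Set (Set α)} {f : ι → ℝ} (hf : Tendsto f l atTop)
    (h : TendstoInMeasure μ (fun n x => information μ (Ps n) x / f n) l (fun _ => 1)) :
    Tendsto (fun n => ⨆ I ∈ Ps n, μ I) l (nhds 0) := by
  rw [tendstoInMeasure_iff_dist] at h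
  refine ENNReal.tendsto_nhds_zero.2 fun ε hε => ?_
  filter_upwards [ENNReal.tendsto_nhds_zero.1 (h (1 / 2) one_half_pos) ε hε,
    hf.eventually_gt_atTop 0, hf.eventually_ge_atTop (2 * -Real.log ε.toReal)]
    with n hfar hpos hlarge
  refine iSup₂_le fun I hI => le_of_not_gt fun hεI => hεI.not_ge (le_trans ?_ hfar)
  have hε_pos : 0 < ε.toReal := ENNReal.toReal_pos hε.ne' hεI.ne_top
  have hε_le : ε.toReal ≤ μ.real I := ENNReal.toReal_mono (measure_ne_top μ I) hεI.le
  refine measure_mono fun x hx => ?_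
  have hhalf : information μ (Ps n) x / f n ≤ 1 / 2 := by
    rw [div_le_iff₀ hpos]
    linarith [information_le_neg_log hε_pos hI hx hε_le]
  calc (1 / 2 : ℝ) ≤ 1 - information μ (Ps n) x / f n := by linarith
    _ ≤ dist (information μ (Ps n) x / f n) 1 := by
      rw [dist_comm]
      exact le_abs_self _

theorem norm_tendsto_zero_general [IsFiniteMeasure μ] {Ps : ℕ → Set (Set α)}
    (hPs : ∀ n, (Ps n).Countable) (hmeas : ∀ n, ∀ I ∈ Ps n, MeasurableSet I)
    {f : ℕ → ℝ} (hf : Tendsto f atTop atTop)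
    (h : TendstoInMeasure μ (fun n x => information μ (Ps n) x / f n) atTop (fun _ => 1) ∨
      ∀ᵐ x ∂μ, Tendsto (fun n => information μ (Ps n) x / f n) atTop (nhds 1)) :
    Tendsto (fun n => ⨆ I ∈ Ps n, μ I) atTop (nhds 0) := by
  refine tendsto_iSup_measure_of_tendstoInMeasure_information hf (h.elim id fun hae => ?_)
  exact tendstoInMeasure_of_tendsto_ae
    (fun n => ((measurable_information (hPs n) (hmeas n)).div_const (f n)).aestronglyMeasurable) hae

end Information

theorem IsTopPartition.measurableSet {P : Set (Set ℝ)} (hP : IsTopPartition P) {I : Set ℝ}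
    (hI : I ∈ P) : MeasurableSet I := by
  obtain ⟨a, b, -, -, -, rfl⟩ := hP.2.1 I hI
  exact measurableSet_Ioo

/-- Proposition: the norm `‖P_n‖_λ = sup_{I ∈ P_n} λ(I)` of a log-balanced sequence of
partitions tends to `0`. -/
theorem norm_tendsto_zero (lam : Measure ℝ) [IsProbabilityMeasure lam]
    (hlam : lam (Set.Icc (0 : ℝ) 1)ᶜ = 0)
    (Ps : ℕ → Set (Set ℝ)) (hPs : ∀ n, IsTopPartition (Ps n))
    (hb : (∃ f, LogBalancedInMeasure lam Ps f) ∨ (∃ f, LogBalancedAE lam Ps f)) :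
    Tendsto (fun n => ⨆ I ∈ Ps n, lam I) atTop (nhds (0 : ENNReal)) := by
  obtain ⟨f, -, hf, h⟩ | ⟨f, -, hf, h⟩ := hb
  · exact norm_tendsto_zero_general (hPs · |>.1) (fun n _ => (hPs n).measurableSet) hf (.inl h)
  · exact norm_tendsto_zero_general (hPs · |>.1) (fun n _ => (hPs n).measurableSet) hf (.inr h)
end
end
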